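/- In the many-to-one capacitated repeated stochastic matching model, where the graph is bipartite and every vertex on one side has capacity 1, for every capacitated stable matching process SM (i.e., for every tie-breaking rule in the greedy step), every online algorithm ALG, and all nonnegative round weights w_1, …, w_T, the expected reward of SM is at least 1/7 times the expected reward of ALG. -/

import Mathlib

open Finset

/-- A finite simple graph presented via an abstract edge type: each edge has a
set of exactly two endpoints, and distinct edges have distinct endpoint sets. -/
structure GraphEdges (V E : Type) where
  ends : E → Finset V
  card_ends : ∀ e, (ends e).card = 2
  ends_injective : Function.Injective ends

variable {V E : Type}

/-- A capacitated matching: each vertex `v` is incident to at most `C v`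
of its edges. -/
def GraphEdges.IsCapMatching [DecidableEq V] (G : GraphEdges V E) (C : V → ℕ)
    (M : Finset E) : Prop :=
  ∀ v, (M.filter (fun e => v ∈ G.ends e)).card ≤ C v

/-- `select` is an online algorithm in the capacitated model: under each
realization `ω` it selects a capacitated matching in every round, and its
round-`t` selection depends only on its own selections in earlier rounds and
on the realized values of the edges it selected in those rounds. -/
def GraphEdges.IsOnlineCap [DecidableEq V] (G : GraphEdges V E) (C : V → ℕ)
    (select : (E → Bool) → ℕ → Finset E) : Prop :=
  (∀ ω t, G.IsCapMatching C (select ω t)) ∧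
  (∀ ω ω' t, (∀ s, s < t → ∀ e ∈ select ω s, ω' e = ω e) → select ω' t = select ω t)

/-- Probability of the sample graph `ω` under independent Bernoulli edges. -/
def probOf [Fintype E] (p : E → ℝ) (ω : E → Bool) : ℝ :=
  ∏ e : E, if ω e then p e else 1 - p e

/-- Expected reward of an algorithm: the `w`-weighted expected number of
successful selected edges over rounds `0, …, T-1`. -/
noncomputable def expectedReward [Fintype E] [DecidableEq E] (p : E → ℝ) (w : ℕ → ℝ)
    (T : ℕ) (select : (E → Bool) → ℕ → Finset E) : ℝ :=
  ∑ ω : E → Bool, probOf p ω *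
    ∑ t ∈ Finset.range T, w t * ((select ω t).filter (fun e => ω e)).card

/-- Edges selected by `select` in rounds before `t` under realization `ω`. -/
def selectedBefore [DecidableEq E] (select : (E → Bool) → ℕ → Finset E)
    (ω : E → Bool) (t : ℕ) : Finset E :=
  (Finset.range t).biUnion (select ω)

/-- An edge `f` is available for the greedy step, given the dead (previously
selected and revealed unsuccessful) edges `D` and the current partial
capacitated matching `M`: it is not dead, not already in `M`, and can be added
to `M` without violating any vertex capacity. -/
def GraphEdges.AvailCap [DecidableEq V] [DecidableEq E] (G : GraphEdges V E) (C : V → ℕ)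
    (D M : Finset E) (f : E) : Prop :=
  f ∉ D ∧ f ∉ M ∧ G.IsCapMatching C (insert f M)

/-- `L` records, in order, the edges added by a run of the greedy procedure
extending the committed capacitated matching `A`, avoiding dead edges `D`:
each added edge is available (w.r.t. the edge set built so far) of maximum
probability, and at the end no available edge remains. -/
def GraphEdges.IsGreedyRunCap [DecidableEq V] [DecidableEq E] (G : GraphEdges V E)
    (C : V → ℕ) (p : E → ℝ) (D A : Finset E) (L : List E) : Prop :=
  (∀ i : Fin L.length,
      G.AvailCap C D (A ∪ (L.take i).toFinset) (L.get i) ∧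
      ∀ f, G.AvailCap C D (A ∪ (L.take i).toFinset) f → p f ≤ p (L.get i)) ∧
  (∀ f, ¬ G.AvailCap C D (A ∪ L.toFinset) f)

/-- `select` is a capacitated stable matching process: an online algorithm
which in each round keeps all previously selected successful edges and
augments them greedily (ties broken arbitrarily). -/
def GraphEdges.IsSMCap [DecidableEq V] [DecidableEq E] (G : GraphEdges V E)
    (C : V → ℕ) (p : E → ℝ) (select : (E → Bool) → ℕ → Finset E) : Prop :=
  G.IsOnlineCap C select ∧
  ∀ ω t,
    ∃ L : List E,
      G.IsGreedyRunCap C p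
        ((selectedBefore select ω t).filter (fun e => ¬ ω e))
        ((selectedBefore select ω t).filter (fun e => ω e)) L ∧
      select ω t = (selectedBefore select ω t).filter (fun e => ω e) ∪ L.toFinset

section Helpers

lemma mem_selB [DecidableEq E] (sel : (E → Bool) → ℕ → Finset E) (ω : E → Bool) (n : ℕ) (e : E) :
    e ∈ selectedBefore sel ω n ↔ ∃ s, s < n ∧ e ∈ sel ω s := by
  simp [selectedBefore]

lemma selB_mono [DecidableEq E] (sel : (E → Bool) → ℕ → Finset E) (ω : E → Bool) {m n : ℕ}
    (h : m ≤ n) : selectedBefore sel ω m ⊆ selectedBefore sel ω n := by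
  intro e he
  rw [mem_selB] at he ⊢
  obtain ⟨s, hs, h1⟩ := he
  exact ⟨s, by omega, h1⟩

lemma online_update [DecidableEq V] [DecidableEq E] {G : GraphEdges V E} {C : V → ℕ}
    {sel : (E → Bool) → ℕ → Finset E} (h : G.IsOnlineCap C sel) (ω : E → Bool) (n : ℕ) (e : E)
    (b : Bool) (he : e ∉ selectedBefore sel ω n) (s : ℕ) (hs : s ≤ n) :
    sel (Function.update ω e b) s = sel ω s := by
  apply h.2
  intro r hr f hf
  apply Function.update_of_ne
  rintro rfl
  exact he ((mem_selB _ _ _ _).2 ⟨r, by omega, hf⟩)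

lemma selB_update [DecidableEq V] [DecidableEq E] {G : GraphEdges V E} {C : V → ℕ}
    {sel : (E → Bool) → ℕ → Finset E} (h : G.IsOnlineCap C sel) (ω : E → Bool) (n : ℕ) (e : E)
    (b : Bool) (he : e ∉ selectedBefore sel ω n) :
    selectedBefore sel (Function.update ω e b) n = selectedBefore sel ω n := by
  unfold selectedBefore
  apply Finset.biUnion_congr rfl
  intro s hs
  exact online_update h ω n e b he s (Finset.mem_range.1 hs).le

lemma mem_selB_update [DecidableEq V] [DecidableEq E] {G : GraphEdges V E} {C : V → ℕ}
    {sel : (E → Bool) → ℕ → Finset E} (h : G.IsOnlineCap C sel) (ω : E → Bool) (n : ℕ) (e : E)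
    (b : Bool) :
    e ∈ selectedBefore sel (Function.update ω e b) n ↔ e ∈ selectedBefore sel ω n := by
  by_cases he : e ∈ selectedBefore sel ω n
  · simp only [he, iff_true]
    by_contra h2
    have := selB_update h (Function.update ω e b) n e (ω e) h2
    simp only [Function.update_idem, Function.update_eq_self] at this
    exact h2 (this ▸ he)
  · rw [selB_update h ω n e b he]

lemma prob_flip [Fintype E] [DecidableEq E] (p : E → ℝ) (g : (E → Bool) → ℝ) (e : E)
    (hg : ∀ ω b, g (Function.update ω e b) = g ω) :
    ∑ ω : E → Bool, probOf p ω * (g ω * (if ω e then 1 else 0))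
      = ∑ ω : E → Bool, probOf p ω * (g ω * p e) := by
  rw [← sub_eq_zero, ← Finset.sum_sub_distrib]
  refine Finset.sum_involution (fun ω _ => Function.update ω e (!ω e)) ?_ ?_ ?_ ?_
  · intro ω _
    have h1 : ∀ ω : E → Bool, probOf p ω
        = (if ω e then p e else 1 - p e) * ∏ f ∈ univ.erase e, if ω f then p f else 1 - p f := by
      intro ω
      exact (Finset.mul_prod_erase univ (fun f => if ω f then p f else 1 - p f)
        (Finset.mem_univ e)).symm
    have h2 : ∏ f ∈ univ.erase e,
        (if (Function.update ω e (!ω e)) f then p f else 1 - p f)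
        = ∏ f ∈ univ.erase e, if ω f then p f else 1 - p f := by
      apply Finset.prod_congr rfl
      intro f hf
      rw [Function.update_of_ne (Finset.ne_of_mem_erase hf)]
    rw [h1 ω, h1 (Function.update ω e (!ω e)), h2, hg]
    cases h : ω e <;> simp <;> ring
  · intro ω _ _ h
    have := congrFun h e
    simp at this
  · intro ω _; exact Finset.mem_univ _
  · intro ω _; simp

lemma ex_probe [DecidableEq V] [Fintype E] [DecidableEq E] {G : GraphEdges V E} {C : V → ℕ}
    {sel : (E → Bool) → ℕ → Finset E} (hs : G.IsOnlineCap C sel) (p : E → ℝ)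
    (h : (E → Bool) → E → ℝ) (hh : ∀ ω e b, h (Function.update ω e b) e = h ω e) (n : ℕ) :
    ∑ ω : E → Bool, probOf p ω *
        ∑ e ∈ selectedBefore sel ω n, h ω e * (if ω e then 1 else 0)
      = ∑ ω : E → Bool, probOf p ω * ∑ e ∈ selectedBefore sel ω n, h ω e * p e := by
  have key : ∀ k : (E → Bool) → E → ℝ,
      ∑ ω : E → Bool, probOf p ω * ∑ e ∈ selectedBefore sel ω n, h ω e * k ω e
      = ∑ e : E, ∑ ω : E → Bool, probOf p ω *
          ((if e ∈ selectedBefore sel ω n then h ω e else 0) * k ω e) := by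
    intro k
    rw [Finset.sum_comm]
    apply Finset.sum_congr rfl
    intro ω _
    rw [← Finset.mul_sum]
    congr 1
    simp [ite_mul, Finset.sum_ite_mem]
  rw [key, key]
  apply Finset.sum_congr rfl
  intro e _
  apply prob_flip p (fun ω => if e ∈ selectedBefore sel ω n then h ω e else 0) e
  intro ω b
  simp only [mem_selB_update hs, hh]

lemma sum_fresh [DecidableEq E] (sel : (E → Bool) → ℕ → Finset E) (ω : E → Bool) (n : ℕ)
    (g : E → ℝ) :
    ∑ e ∈ selectedBefore sel ω n, g e
      = ∑ s ∈ Finset.range n, ∑ e ∈ sel ω s \ selectedBefore sel ω s, g e := by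
  induction n with
  | zero => simp [selectedBefore]
  | succ n ih =>
    rw [Finset.sum_range_succ, ← ih,
      add_comm (∑ e ∈ selectedBefore sel ω n, g e), ← Finset.sum_union Finset.sdiff_disjoint]
    apply Finset.sum_congr _ (fun _ _ => rfl)
    rw [Finset.sdiff_union_self_eq_union]
    simp [selectedBefore, Finset.range_add_one, Finset.biUnion_insert]

/-- Charging factor of a vertex. -/
def kap (side : V → Bool) (v : V) : ℕ := if side v then 1 else 2

/-- Degree of a vertex in an edge set. -/
def GraphEdges.dg [DecidableEq V] (G : GraphEdges V E) (M : Finset E) (v : V) : ℕ :=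
  (M.filter (fun e => v ∈ G.ends e)).card

lemma sum_kap [DecidableEq V] [Fintype E] (G : GraphEdges V E) (side : V → Bool)
    (hbip : ∀ e, ∃ a b, G.ends e = {a, b} ∧ side a = true ∧ side b = false)
    (X : Finset E) (g : E → ℝ) :
    ∑ v ∈ univ.biUnion G.ends, (kap side v : ℝ) * ∑ e ∈ X.filter (fun e => v ∈ G.ends e), g e
      = 3 * ∑ e ∈ X, g e := by
  simp_rw [Finset.mul_sum, Finset.sum_filter]
  rw [Finset.sum_comm]
  apply Finset.sum_congr rfl
  intro e _
  rw [← Finset.sum_filter]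
  have : (univ.biUnion G.ends).filter (fun v => v ∈ G.ends e) = G.ends e := by
    ext v
    simp only [Finset.mem_filter, Finset.mem_biUnion, Finset.mem_univ, true_and]
    exact ⟨fun h => h.2, fun h => ⟨⟨e, h⟩, h⟩⟩
  rw [this]
  obtain ⟨a, b, h, ha, hb⟩ := hbip e
  have hab : a ≠ b := by rintro rfl; simp [ha] at hb
  rw [h, Finset.sum_pair hab]
  simp [kap, ha, hb]
  ring

lemma sum_le_cover [DecidableEq V] [Fintype E] (G : GraphEdges V E) (X : Finset E) (g : E → ℝ)
    (hg : ∀ e, 0 ≤ g e) (P : V → E → Prop) [∀ v, DecidablePred (P v)]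
    (hP : ∀ e ∈ X, ∃ v ∈ G.ends e, P v e) :
    ∑ e ∈ X, g e ≤ ∑ v ∈ univ.biUnion G.ends,
      ∑ e ∈ X.filter (fun e => v ∈ G.ends e ∧ P v e), g e := by
  simp_rw [Finset.sum_filter]
  rw [Finset.sum_comm]
  apply Finset.sum_le_sum
  intro e he
  obtain ⟨v, hv, hPv⟩ := hP e he
  have hmem : v ∈ univ.biUnion G.ends := Finset.mem_biUnion.2 ⟨e, Finset.mem_univ _, hv⟩
  refine le_trans ?_ (Finset.single_le_sum (f := fun v => if v ∈ G.ends e ∧ P v e then g e else 0)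
    ?_ hmem)
  · simp [hv, hPv]
  · intro u _
    split_ifs
    · exact hg e
    · exact le_rfl

lemma dg_mono [DecidableEq V] (G : GraphEdges V E) {M N : Finset E} (h : M ⊆ N) (v : V) :
    G.dg M v ≤ G.dg N v := Finset.card_le_card (Finset.filter_subset_filter _ h)

/-- An edge never probed in a round is blocked at one of its endpoints. -/
lemma blocked [DecidableEq V] [DecidableEq E] (G : GraphEdges V E) (C : V → ℕ) (p : E → ℝ)
    (D A : Finset E) (L : List E) (hL : G.IsGreedyRunCap C p D A L)
    (hM : G.IsCapMatching C (A ∪ L.toFinset)) (e : E) (hD : e ∉ D) (he : e ∉ A ∪ L.toFinset) :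
    ∃ v ∈ G.ends e, C v ≤ G.dg (A ∪ L.toFinset) v ∧
      ∀ f ∈ L.toFinset, f ∉ A → v ∈ G.ends f → p e ≤ p f := by
  classical
  have hex : ∃ i, i ≤ L.length ∧ ¬ G.AvailCap C D (A ∪ (L.take i).toFinset) e :=
    ⟨L.length, le_rfl, by simpa using hL.2 e⟩
  obtain ⟨hi, hna⟩ := Nat.find_spec hex
  have hmin := fun j => Nat.find_min (m := j) hex
  set i := Nat.find hex
  have hsub : A ∪ (L.take i).toFinset ⊆ A ∪ L.toFinset := by
    apply Finset.union_subset_union_right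
    intro f hf
    rw [List.mem_toFinset] at hf ⊢
    exact List.mem_of_mem_take hf
  have hnm : ¬ G.IsCapMatching C (insert e (A ∪ (L.take i).toFinset)) := by
    intro h
    exact hna ⟨hD, fun h' => he (hsub h'), h⟩
  unfold GraphEdges.IsCapMatching at hnm
  push Not at hnm
  obtain ⟨v, hv⟩ := hnm
  have hMv := hM v
  have hle := dg_mono G hsub v
  unfold GraphEdges.dg at hle
  rw [Finset.filter_insert] at hv
  split_ifs at hv with hve
  swap
  · omega
  have h3 := Finset.card_insert_le e ((A ∪ (L.take i).toFinset).filter (fun e => v ∈ G.ends e))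
  refine ⟨v, hve, ?_, ?_⟩
  · unfold GraphEdges.dg; omega
  · intro f hf hfA hvf
    have heq := Finset.eq_of_subset_of_card_le
      (Finset.filter_subset_filter (fun e => v ∈ G.ends e) hsub) (by omega)
    have hf2 : f ∈ (A ∪ L.toFinset).filter (fun e => v ∈ G.ends e) := by
      simp only [Finset.mem_filter, Finset.mem_union]
      exact ⟨Or.inr hf, hvf⟩
    rw [← heq] at hf2
    simp only [Finset.mem_filter, Finset.mem_union, hfA, false_or, List.mem_toFinset] at hf2
    obtain ⟨j, hj, rfl⟩ := List.mem_iff_getElem.1 hf2.1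
    rw [List.length_take] at hj
    have hjl : j < L.length := by omega
    have hav := hmin j (by omega)
    have hav : G.AvailCap C D (A ∪ (L.take j).toFinset) e := by
      by_contra hc
      exact hav ⟨hjl.le, hc⟩
    have := (hL.1 ⟨j, hjl⟩).2 e hav
    simpa using this

/-- Charging of the probes of `B` in one round to the fresh probes `F`. -/
lemma charge [DecidableEq V] [Fintype E] [DecidableEq E] (G : GraphEdges V E) (C : V → ℕ)
    (side : V → Bool)
    (hbip : ∀ e, ∃ a b, G.ends e = {a, b} ∧ side a = true ∧ side b = false)
    (hcap1 : ∀ v, side v = true → C v = 1)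
    (p : E → ℝ) (hp : ∀ e, 0 ≤ p e) (A F B : Finset E)
    (hB : G.IsCapMatching C B)
    (hgood : ∀ e ∈ B, ∀ v ∈ G.ends e, kap side v * G.dg A v < C v)
    (hbl : ∀ e ∈ B, ∃ v ∈ G.ends e, C v ≤ G.dg (A ∪ F) v ∧
      ∀ f ∈ F, v ∈ G.ends f → p e ≤ p f) :
    ∑ e ∈ B, p e ≤ 3 * ∑ f ∈ F, p f := by
  classical
  refine (sum_le_cover G B p hp (fun v e => C v ≤ G.dg (A ∪ F) v ∧
      ∀ f ∈ F, v ∈ G.ends f → p e ≤ p f) hbl).trans ?_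
  rw [← sum_kap G side hbip]
  apply Finset.sum_le_sum
  intro v _
  set Bv := B.filter (fun e => v ∈ G.ends e ∧ C v ≤ G.dg (A ∪ F) v ∧
      ∀ f ∈ F, v ∈ G.ends f → p e ≤ p f) with hBv
  rcases Bv.eq_empty_or_nonempty with h0 | h0
  · rw [h0, Finset.sum_empty]
    exact mul_nonneg (Nat.cast_nonneg _) (Finset.sum_nonneg fun e _ => hp e)
  · obtain ⟨e, he, hmax⟩ := Finset.exists_max_image Bv p h0
    have he' := he
    simp only [hBv, Finset.mem_filter] at he'
    obtain ⟨heB, hve, hdeg, hpe⟩ := he'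
    have hcard : Bv.card ≤ C v := by
      refine le_trans (Finset.card_le_card ?_) (hB v)
      intro x hx
      simp only [hBv, Finset.mem_filter] at hx ⊢
      exact ⟨hx.1, hx.2.1⟩
    have hg := hgood e heB v hve
    have hAF : G.dg (A ∪ F) v ≤ G.dg A v + G.dg F v := by
      unfold GraphEdges.dg
      rw [Finset.filter_union]
      exact Finset.card_union_le _ _
    have hC2 : C v ≤ kap side v * G.dg F v := by
      unfold kap at hg ⊢
      by_cases hs : side v = true
      · have := hcap1 v hs
        simp only [hs, if_true] at hg ⊢
        omega
      · simp only [hs] at hg ⊢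
        simp at hg ⊢
        omega
    have h1 : ∑ x ∈ Bv, p x ≤ Bv.card * p e := by
      rw [← nsmul_eq_mul]
      exact Finset.sum_le_card_nsmul _ _ _ hmax
    have h2 : (G.dg F v : ℝ) * p e ≤ ∑ f ∈ F.filter (fun e => v ∈ G.ends e), p f := by
      rw [← nsmul_eq_mul]
      apply Finset.card_nsmul_le_sum
      intro f hf
      rw [Finset.mem_filter] at hf
      exact hpe f hf.1 hf.2
    have h3 : (Bv.card : ℝ) ≤ kap side v * G.dg F v := by
      exact_mod_cast hcard.trans hC2
    calc ∑ x ∈ Bv, p x ≤ Bv.card * p e := h1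
      _ ≤ (kap side v * G.dg F v) * p e := mul_le_mul_of_nonneg_right h3 (hp e)
      _ = kap side v * (G.dg F v * p e) := by ring
      _ ≤ _ := mul_le_mul_of_nonneg_left h2 (Nat.cast_nonneg _)

/-- Successful edges of a matching meeting a heavily used vertex. -/
lemma charge_final [DecidableEq V] [Fintype E] [DecidableEq E] (G : GraphEdges V E) (C : V → ℕ)
    (side : V → Bool)
    (hbip : ∀ e, ∃ a b, G.ends e = {a, b} ∧ side a = true ∧ side b = false)
    (S N : Finset E) (hN : G.IsCapMatching C N)
    (hbad : ∀ e ∈ N, ∃ v ∈ G.ends e, C v ≤ kap side v * G.dg S v) :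
    (N.card : ℝ) ≤ 3 * S.card := by
  classical
  have h1 := sum_le_cover G N (fun _ => (1 : ℝ)) (fun _ => zero_le_one)
    (fun v _ => C v ≤ kap side v * G.dg S v) hbad
  have h2 := sum_kap G side hbip S (fun _ => (1 : ℝ))
  simp only [Finset.sum_const, nsmul_eq_mul, mul_one] at h1 h2
  rw [← h2]
  refine h1.trans (Finset.sum_le_sum ?_)
  intro v _
  by_cases h : C v ≤ kap side v * G.dg S v
  · simp only [h, and_true]
    have := (hN v).trans h
    unfold GraphEdges.dg at this
    exact_mod_cast this
  · simp only [h, and_false, Finset.filter_false, Finset.card_empty, Nat.cast_zero]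
    positivity

lemma probOf_nonneg [Fintype E] (p : E → ℝ) (hp : ∀ e, 0 ≤ p e ∧ p e ≤ 1) (ω : E → Bool) :
    0 ≤ probOf p ω := by
  apply Finset.prod_nonneg
  intro e _
  have := hp e
  split_ifs <;> linarith

lemma capMatching_subset [DecidableEq V] {G : GraphEdges V E} {C : V → ℕ} {M N : Finset E}
    (h : G.IsCapMatching C N) (hs : M ⊆ N) : G.IsCapMatching C M := fun v =>
  (dg_mono G hs v).trans (h v)

lemma per_round [DecidableEq V] [Fintype E] [DecidableEq E]
    (G : GraphEdges V E) (C : V → ℕ)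
    (side : V → Bool)
    (hbip : ∀ e, ∃ a b, G.ends e = {a, b} ∧ side a = true ∧ side b = false)
    (hcap1 : ∀ v, side v = true → C v = 1)
    (p : E → ℝ) (hp : ∀ e, 0 ≤ p e ∧ p e ≤ 1) (t : ℕ)
    (sm alg : (E → Bool) → ℕ → Finset E)
    (hsm : G.IsSMCap C p sm) (halg : G.IsOnlineCap C alg) :
    ∑ ω : E → Bool, probOf p ω * (((alg ω t).filter (fun e => ω e)).card : ℝ)
      ≤ 6 * ∑ ω : E → Bool, probOf p ω * (((sm ω t).filter (fun e => ω e)).card : ℝ) := by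
  classical
  have hS : ∀ ω, (sm ω t).filter (fun e => ω e)
      = (selectedBefore sm ω (t + 1)).filter (fun e => ω e) := by
    intro ω
    obtain ⟨L, -, hL⟩ := hsm.2 ω t
    have h1 : selectedBefore sm ω (t + 1) = sm ω t ∪ selectedBefore sm ω t := by
      simp [selectedBefore, Finset.range_add_one, Finset.biUnion_insert]
    rw [h1, Finset.filter_union]
    symm
    apply Finset.union_eq_left.2
    intro e he
    rw [Finset.mem_filter]
    refine ⟨?_, (Finset.mem_filter.1 he).2⟩
    rw [hL]
    exact Finset.mem_union_left _ he
  let S : (E → Bool) → Finset E := fun ω => (selectedBefore sm ω (t + 1)).filter (fun e => ω e)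
  let Q : (E → Bool) → E → Prop := fun ω e => e ∉ selectedBefore sm ω (t + 1) ∧
    ∀ v ∈ G.ends e, kap side v * G.dg (S ω) v < C v
  have hQ1 : ∀ ω e b, Q ω e → Q (Function.update ω e b) e := by
    rintro ω e b ⟨h1, h2⟩
    refine ⟨by rwa [mem_selB_update hsm.1], ?_⟩
    have : S (Function.update ω e b) = S ω := by
      simp only [S, selB_update hsm.1 ω (t + 1) e b h1]
      apply Finset.filter_congr
      intro f hf
      rw [Function.update_of_ne]
      rintro rfl
      exact h1 hf
    rwa [this]
  have hQ : ∀ ω e b, Q (Function.update ω e b) e ↔ Q ω e := by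
    intro ω e b
    refine ⟨fun h => ?_, hQ1 ω e b⟩
    have := hQ1 _ e (ω e) h
    simpa only [Function.update_idem, Function.update_eq_self] using this
  let h : (E → Bool) → E → ℝ := fun ω e => if Q ω e then 1 else 0
  have hh : ∀ ω e b, h (Function.update ω e b) e = h ω e := by
    intro ω e b
    simp only [h, hQ]
  have hX := ex_probe halg p h hh (t + 1)
  have hY := ex_probe hsm.1 p (fun _ _ => 1) (fun _ _ _ => rfl) (t + 1)
  -- deterministic decomposition
  have hdet : ∀ ω : E → Bool, (((alg ω t).filter (fun e => ω e)).card : ℝ) ≤ 3 * (S ω).card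
      + ∑ e ∈ selectedBefore alg ω (t + 1), h ω e * (if ω e then 1 else 0) := by
    intro ω
    set N := (alg ω t).filter (fun e => ω e) with hN
    rw [← Finset.card_filter_add_card_filter_not (s := N) (fun e => Q ω e)]
    have h1 : ((N.filter (fun e => ¬ Q ω e)).card : ℝ) ≤ 3 * (S ω).card := by
      apply charge_final G C side hbip
      · exact capMatching_subset (halg.1 ω t)
          ((Finset.filter_subset _ _).trans (Finset.filter_subset _ _))
      · intro e he
        rw [Finset.mem_filter] at he
        obtain ⟨heN, heQ⟩ := he
        by_cases hsel : e ∈ selectedBefore sm ω (t + 1)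
        · obtain ⟨a, b, hab, ha, hb⟩ := hbip e
          refine ⟨a, by simp [hab], ?_⟩
          rw [hcap1 a ha]
          have : 0 < G.dg (S ω) a := by
            apply Finset.card_pos.2
            refine ⟨e, ?_⟩
            simp only [S, Finset.mem_filter, hab]
            exact ⟨⟨hsel, (Finset.mem_filter.1 heN).2⟩, by simp⟩
          simp [kap, ha]
          omega
        · by_contra hc
          push Not at hc
          exact heQ ⟨hsel, hc⟩
    have h2 : ((N.filter (fun e => Q ω e)).card : ℝ)
        ≤ ∑ e ∈ selectedBefore alg ω (t + 1), h ω e * (if ω e then 1 else 0) := by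
      have : ((N.filter (fun e => Q ω e)).card : ℝ)
          = ∑ e ∈ N.filter (fun e => Q ω e), h ω e * (if ω e then 1 else 0) := by
        rw [Finset.card_eq_sum_ones, Nat.cast_sum]
        apply Finset.sum_congr rfl
        intro e he
        simp only [hN, Finset.mem_filter] at he
        simp [h, he.2, he.1.2]
      rw [this]
      apply Finset.sum_le_sum_of_subset_of_nonneg
      · intro e he
        simp only [hN, Finset.mem_filter] at he
        exact (mem_selB _ _ _ _).2 ⟨t, by omega, he.1.1⟩
      · intro e _ _
        simp only [h]
        split_ifs <;> simp
    push_cast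
    linarith
  -- charging of probes
  have hch : ∀ ω : E → Bool, ∑ e ∈ selectedBefore alg ω (t + 1), h ω e * p e
      ≤ 3 * ∑ e ∈ selectedBefore sm ω (t + 1), p e := by
    intro ω
    rw [sum_fresh, sum_fresh, Finset.mul_sum]
    apply Finset.sum_le_sum
    intro s hs
    have hst : s < t + 1 := Finset.mem_range.1 hs
    have e1 : ∑ e ∈ alg ω s \ selectedBefore alg ω s, h ω e * p e
        = ∑ e ∈ (alg ω s \ selectedBefore alg ω s).filter (fun e => Q ω e), p e := by
      rw [Finset.sum_filter]
      apply Finset.sum_congr rfl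
      intro e _
      simp [h]
    rw [e1]
    set A := (selectedBefore sm ω s).filter (fun e => ω e) with hA
    obtain ⟨L, hL, hsel⟩ := hsm.2 ω s
    rw [← hA] at hL hsel
    have hAS : A ⊆ S ω := Finset.filter_subset_filter _ (selB_mono sm ω hst.le)
    have hcm := hsm.1.1 ω s
    have hFL : ∀ f ∈ sm ω s \ selectedBefore sm ω s, f ∈ L.toFinset ∧ f ∉ A := by
      intro f hf
      rw [Finset.mem_sdiff] at hf
      have hfA : f ∉ A := fun h' => hf.2 (Finset.mem_filter.1 h').1
      have h1 := hf.1
      rw [hsel, Finset.mem_union] at h1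
      exact ⟨h1.resolve_left hfA, hfA⟩
    have hsub : A ∪ L.toFinset ⊆ A ∪ (sm ω s \ selectedBefore sm ω s) := by
      intro f hf
      rw [Finset.mem_union] at hf ⊢
      rcases hf with hf | hf
      · exact Or.inl hf
      · right
        rw [Finset.mem_sdiff]
        refine ⟨by rw [hsel]; exact Finset.mem_union_right _ hf, fun hb => ?_⟩
        rw [List.mem_toFinset] at hf
        obtain ⟨j, hj, rfl⟩ := List.mem_iff_getElem.1 hf
        obtain ⟨a1, a2, -⟩ := (hL.1 ⟨j, hj⟩).1
        simp only [List.get_eq_getElem, Finset.mem_union, not_or, hA, Finset.mem_filter,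
          hb, true_and] at a1 a2
        exact a1 a2.1
    apply charge G C side hbip hcap1 p (fun e => (hp e).1) A
    · exact capMatching_subset (halg.1 ω s)
        ((Finset.filter_subset _ _).trans Finset.sdiff_subset)
    · intro e he v hv
      exact lt_of_le_of_lt (Nat.mul_le_mul_left _ (dg_mono G hAS v))
        ((Finset.mem_filter.1 he).2.2 v hv)
    · intro e he
      have hne := (Finset.mem_filter.1 he).2.1
      obtain ⟨v, hv, h1, h2⟩ := blocked G C p _ A L hL (hsel ▸ hcm) e
        (fun h' => hne (selB_mono sm ω hst.le (Finset.mem_filter.1 h').1))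
        (fun h' => hne ((mem_selB _ _ _ _).2 ⟨s, hst, by rwa [hsel]⟩))
      refine ⟨v, hv, h1.trans (dg_mono G hsub v), ?_⟩
      intro f hf hvf
      exact h2 f (hFL f hf).1 (hFL f hf).2 hvf
  have hSc : ∀ ω : E → Bool, ((S ω).card : ℝ)
      = ∑ e ∈ selectedBefore sm ω (t + 1), (if ω e then (1 : ℝ) else 0) := by
    intro ω
    simp [S]
  simp_rw [hS]
  change _ ≤ 6 * ∑ ω : E → Bool, probOf p ω * ((S ω).card : ℝ)
  have hsum1 : ∑ ω : E → Bool, probOf p ω * (((alg ω t).filter (fun e => ω e)).card : ℝ)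
      ≤ ∑ ω : E → Bool, probOf p ω * (3 * (S ω).card
      + ∑ e ∈ selectedBefore alg ω (t + 1), h ω e * (if ω e then 1 else 0)) :=
    Finset.sum_le_sum fun ω _ => mul_le_mul_of_nonneg_left (hdet ω) (probOf_nonneg p hp ω)
  have hsum2 : ∑ ω : E → Bool, probOf p ω * ∑ e ∈ selectedBefore alg ω (t + 1), h ω e * p e
      ≤ ∑ ω : E → Bool, probOf p ω * (3 * ∑ e ∈ selectedBefore sm ω (t + 1), p e) :=
    Finset.sum_le_sum fun ω _ => mul_le_mul_of_nonneg_left (hch ω) (probOf_nonneg p hp ω)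
  simp only [mul_add, Finset.sum_add_distrib] at hsum1
  rw [hX] at hsum1
  simp only [one_mul] at hY
  simp only [← hSc] at hY
  simp only [mul_left_comm _ (3 : ℝ), ← Finset.mul_sum] at hsum1 hsum2
  linarith

end Helpers

/-- In the many-to-one capacitated model — the graph is
bipartite with `side` distinguishing the two parts, and every vertex on the
`true` side has capacity 1 — every capacitated stable matching process is a
`1/7`-approximation to every online algorithm. -/
theorem smCap_manyToOne_approximates_opt
    {V E : Type} [DecidableEq V] [Fintype E] [DecidableEq E]
    (G : GraphEdges V E) (C : V → ℕ) (hC : ∀ v, 0 < C v)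
    (side : V → Bool)
    (hbip : ∀ e, ∃ a b, G.ends e = {a, b} ∧ side a = true ∧ side b = false)
    (hcap1 : ∀ v, side v = true → C v = 1)
    (p : E → ℝ) (hp : ∀ e, 0 ≤ p e ∧ p e ≤ 1)
    (T : ℕ) (w : ℕ → ℝ) (hw : ∀ t, 0 ≤ w t)
    (sm alg : (E → Bool) → ℕ → Finset E)
    (hsm : G.IsSMCap C p sm) (halg : G.IsOnlineCap C alg) :
    (1 / 7 : ℝ) * expectedReward p w T alg ≤ expectedReward p w T sm := by
  have hr : ∀ sel : (E → Bool) → ℕ → Finset E, expectedReward p w T sel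
      = ∑ t ∈ Finset.range T, w t *
        ∑ ω : E → Bool, probOf p ω * (((sel ω t).filter (fun e => ω e)).card : ℝ) := by
    intro sel
    unfold expectedReward
    simp_rw [Finset.mul_sum]
    rw [Finset.sum_comm]
    refine Finset.sum_congr rfl fun t _ => Finset.sum_congr rfl fun ω _ => ?_
    ring
  rw [hr, hr, Finset.mul_sum]
  apply Finset.sum_le_sum
  intro t _
  have h1 := per_round G C side hbip hcap1 p hp t sm alg hsm halg
  have h0 : 0 ≤ ∑ ω : E → Bool, probOf p ω * (((sm ω t).filter (fun e => ω e)).card : ℝ) :=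
    Finset.sum_nonneg fun ω _ => mul_nonneg (probOf_nonneg p hp ω) (Nat.cast_nonneg _)
  rw [mul_left_comm]
  apply mul_le_mul_of_nonneg_left _ (hw t)
  linarith
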